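/- arXiv:math/0509548 — 2 statements merged into one kernel-verified Lean document; each statement's English description precedes it below -/
import Mathlib

section
/- Let K be a commutative ring, Ω a set, and M a symétral mould on Ω. Then M is invertible for mould multiplication and its multiplicative inverse N is given by N^∅ = 1 and N^{(ω_1,…,ω_r)} = (−1)^r M^{(ω_r,…,ω_1)} for every word (ω_1,…,ω_r), i.e., the inverse is obtained by reversing the word and multiplying by (−1)^{length}. -/
namespace Moulds

variable {X : Type*} {K : Type*}

/-- The multiset of shuffles (interleavings) of two words, counted with multiplicity. -/
def shuffles : List X → List X → Multiset (List X)
  | [], v => {v}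
  | a :: u, [] => {a :: u}
  | a :: u, b :: v =>
      (shuffles u (b :: v)).map (a :: ·) + (shuffles (a :: u) v).map (b :: ·)
termination_by u v => u.length + v.length

/-- The multiset of contracting shuffles of two words: interleavings in which any
pair of adjacent letters coming one from each word may be contracted to their sum. -/
def cshuffles [Add X] : List X → List X → Multiset (List X)
  | [], v => {v}
  | a :: u, [] => {a :: u}
  | a :: u, b :: v =>
      (cshuffles u (b :: v)).map (a :: ·) + (cshuffles (a :: u) v).map (b :: ·)
        + (cshuffles u v).map ((a + b) :: ·)
termination_by u v => u.length + v.length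

/-- Shuffle sum Σ_{w ∈ sh(u,v)} M^w (with multiplicity). -/
def shuffleSum [AddCommMonoid K] (M : List X → K) (u v : List X) : K :=
  ((shuffles u v).map M).sum

/-- Contracting shuffle sum Σ_{w ∈ csh(u,v)} M^w (with multiplicity). -/
def cshuffleSum [Add X] [AddCommMonoid K] (M : List X → K) (u v : List X) : K :=
  ((cshuffles u v).map M).sum

/-- A mould is alternal if it vanishes on ∅ and all its nontrivial shuffle sums vanish. -/
def Alternal [AddCommMonoid K] (M : List X → K) : Prop :=
  M [] = 0 ∧ ∀ u v : List X, u ≠ [] → v ≠ [] → shuffleSum M u v = 0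

/-- A mould is symétral if M^∅ = 1 and shuffle sums multiply. -/
def Symetral [CommRing K] (M : List X → K) : Prop :=
  M [] = 1 ∧ ∀ u v : List X, shuffleSum M u v = M u * M v

/-- A mould is alternel if it vanishes on ∅ and all its nontrivial contracting
shuffle sums vanish. -/
def Alternel [Add X] [AddCommMonoid K] (M : List X → K) : Prop :=
  M [] = 0 ∧ ∀ u v : List X, u ≠ [] → v ≠ [] → cshuffleSum M u v = 0

/-- A mould is symétrel if M^∅ = 1 and contracting shuffle sums multiply. -/
def Symetrel [Add X] [CommRing K] (M : List X → K) : Prop :=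
  M [] = 1 ∧ ∀ u v : List X, cshuffleSum M u v = M u * M v

/-- Mould multiplication: (M × N)^w = Σ_{w = w¹w²} M^{w¹} N^{w²}. -/
def mmul [CommRing K] (M N : List X → K) : List X → K :=
  fun w => ∑ i ∈ Finset.range (w.length + 1), M (w.take i) * N (w.drop i)

/-- The unit mould 1^•, equal to 1 on the empty word and 0 elsewhere. -/
def mone [One K] [Zero K] : List X → K :=
  fun w => match w with | [] => 1 | _ => 0

/-- The mould I^•, equal to 1 on one-letter words and 0 elsewhere. -/
def mId [One K] [Zero K] : List X → K :=
  fun w => if w.length = 1 then 1 else 0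

/-- All factorizations of a word into nonempty consecutive blocks; a block is
recorded as (first letter, rest of the block). -/
def splits : List X → List (List (X × List X))
  | [] => [[]]
  | a :: t =>
      (splits t).flatMap fun p =>
        match p with
        | [] => [[(a, ([] : List X))]]
        | (b, r) :: ps => [(a, b :: r) :: ps, (a, ([] : List X)) :: (b, r) :: ps]

/-- The sum ‖·‖ of the letters of a (nonempty) block. -/
def blockSum [Add X] (b : X × List X) : X := b.2.foldl (· + ·) b.1

/-- Mould composition:
(M ∘ N)^w = Σ_{w = w¹⋯wˢ, wⁱ ≠ ∅} M^{(‖w¹‖,…,‖wˢ‖)} N^{w¹} ⋯ N^{wˢ}. -/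
def mcomp [Add X] [CommRing K] (M N : List X → K) : List X → K :=
  fun w => ((splits w).map
    (fun p => M (p.map blockSum) * (p.map (fun b => N (b.1 :: b.2))).prod)).sum

/-- The monomial series associated to a word. -/
def mono [DecidableEq X] [One K] [Zero K] (w : List X) : List X → K :=
  fun w' => if w' = w then 1 else 0

end Moulds

namespace Moulds

/- STATEMENT 14: Over a commutative ring K, a symétral mould M is invertible for
mould multiplication, with two-sided inverse N given by N^∅ = 1 and
N^{(ω₁,…,ω_r)} = (−1)^r M^{(ω_r,…,ω₁)} (word reversal with sign (−1)^{length}). -/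

variable {Ω : Type*} {K : Type*} [CommRing K]

lemma shuffles_nil_left {X : Type*} (v : List X) : shuffles [] v = {v} := by
  rw [shuffles]

lemma shuffles_nil_right {X : Type*} (v : List X) : shuffles v [] = {v} := by
  cases v <;> rw [shuffles]

lemma shuffles_cons {X : Type*} (a b : X) (u v : List X) : shuffles (a :: u) (b :: v) =
    (shuffles u (b :: v)).map (a :: ·) + (shuffles (a :: u) v).map (b :: ·) := by
  rw [shuffles]

lemma shuffles_snoc {X : Type*} (a b : X) : ∀ (u v : List X),
    shuffles (u ++ [a]) (v ++ [b]) =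
    (shuffles u (v ++ [b])).map (· ++ [a]) + (shuffles (u ++ [a]) v).map (· ++ [b])
  | [], [] => by
      simp [shuffles_cons, shuffles_nil_left, shuffles_nil_right, add_comm]
  | [], d :: v => by
      have ih := shuffles_snoc a b [] v
      simp only [List.nil_append] at ih
      simp [-Multiset.singleton_add, shuffles_cons, shuffles_nil_left, ih, Multiset.map_map]
      abel
  | c :: u, [] => by
      have ih := shuffles_snoc a b u []
      simp only [List.nil_append] at ih
      simp [shuffles_cons, shuffles_nil_right, ih, Multiset.map_map]
      abel
  | c :: u, d :: v => by
      have ih := shuffles_snoc a b u (d :: v)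
      have ih2 := shuffles_snoc a b (c :: u) v
      simp only [List.cons_append] at ih ih2
      simp [shuffles_cons, ih, ih2, Multiset.map_map]
      abel
termination_by u v => u.length + v.length

lemma shuffles_reverse {X : Type*} : ∀ (u v : List X),
    shuffles u.reverse v.reverse = (shuffles u v).map List.reverse
  | [], v => by simp [shuffles_nil_left]
  | a :: u, [] => by simp [shuffles_nil_right]
  | a :: u, b :: v => by
      have ih := shuffles_reverse u (b :: v)
      have ih2 := shuffles_reverse (a :: u) v
      simp only [List.reverse_cons] at ih ih2
      simp [shuffles_cons, shuffles_snoc, ih, ih2, Multiset.map_map]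
termination_by u v => u.length + v.length

lemma Symetral.reverse {X K : Type*} [CommRing K] {M : List X → K} (hM : Symetral M) :
    Symetral (fun w => M w.reverse) := by
  refine ⟨by simpa using hM.1, fun u v => ?_⟩
  rw [← hM.2, shuffleSum, shuffleSum, shuffles_reverse, Multiset.map_map]
  rfl

lemma telescope {X K : Type*} [CommRing K] (f : List X → K) : ∀ (v : List X) (a : X) (u : List X),
    ∑ i ∈ Finset.range (v.length + 1),
      (-1) ^ i * shuffleSum f ((v.take i).reverse ++ a :: u) (v.drop i)
      = shuffleSum (fun w => f (a :: w)) u v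
  | [], a, u => by simp [shuffleSum, shuffles_nil_right]
  | b :: v, a, u => by
      have ih := telescope f v b (a :: u)
      rw [List.length_cons, Finset.sum_range_succ']
      simp only [List.take_succ_cons, List.drop_succ_cons, List.reverse_cons, List.append_assoc,
        List.singleton_append, pow_succ', neg_mul, one_mul, Finset.sum_neg_distrib, ih]
      simp [shuffleSum, shuffles_cons, Multiset.map_map]

lemma alternating {X K : Type*} [CommRing K] (f : List X → K) (b : X) (v : List X) :
    ∑ i ∈ Finset.range ((b :: v).length + 1),
      (-1) ^ i * shuffleSum f (((b :: v).take i).reverse) ((b :: v).drop i) = 0 := by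
  have ih := telescope f v b []
  rw [List.length_cons, Finset.sum_range_succ']
  simp only [List.take_succ_cons, List.drop_succ_cons, List.reverse_cons,
    pow_succ', neg_mul, one_mul, Finset.sum_neg_distrib, ih]
  simp [shuffleSum, shuffles_nil_left]

theorem symetral_inverse_eq_signed_reversal (M : List Ω → K) (hM : Symetral M) :
    mmul M (fun w => (-1) ^ w.length * M w.reverse) = mone ∧
    mmul (fun w => (-1) ^ w.length * M w.reverse) M = mone ∧
    ((-1 : K) ^ ([] : List Ω).length * M ([] : List Ω).reverse = 1) := by
  refine ⟨?_, ?_, by simpa using hM.1⟩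
  · funext w
    cases w with
    | nil => simp [mmul, mone, hM.1]
    | cons b v =>
      have h := alternating (fun w => M w.reverse) b v
      simp only [hM.reverse.2, List.reverse_reverse] at h
      have h2 := congrArg (fun x => (-1) ^ (b :: v).length * x) h
      simp only [mul_zero, Finset.mul_sum] at h2
      refine Eq.trans (Finset.sum_congr rfl fun i hi => ?_) h2
      have hi' : i ≤ (b :: v).length := Nat.lt_succ_iff.mp (Finset.mem_range.mp hi)
      have e : ((-1 : K)) ^ (b :: v).length * (-1) ^ i = (-1) ^ ((b :: v).drop i).length := by
        rw [List.length_drop]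
        obtain ⟨k, hk⟩ := Nat.exists_eq_add_of_le hi'
        rw [hk, Nat.add_sub_cancel_left, pow_add, mul_right_comm, ← mul_pow]
        simp
      beta_reduce
      rw [← e]
      ring
  · funext w
    cases w with
    | nil => simp [mmul, mone, hM.1]
    | cons b v =>
      have h := alternating M b v
      simp only [hM.2] at h
      refine Eq.trans (Finset.sum_congr rfl fun i hi => ?_) h
      have hi' : i ≤ (b :: v).length := Nat.lt_succ_iff.mp (Finset.mem_range.mp hi)
      simp only [List.length_take, min_eq_left hi']
      ring

end Moulds
end

section
/- Let K be a field, Ω a set, and λ : Ω* → K a function satisfying λ(uv) = λ(u) + λ(v) for all words u, v, and λ(w) ≠ 0 for every nonempty word w. Let M and A be moulds on Ω such that M^∅ = 1, A is alternal, and λ(w) · M^w = (A × M)^w for every word w. Then M is symétral. -/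
namespace Moulds

/- STATEMENT 16: Over a field K, suppose λ : Ω* → K satisfies λ(uv) = λ(u) + λ(v)
and λ(w) ≠ 0 for nonempty w.  If M^∅ = 1, A is alternal and
λ(w)·M^w = (A × M)^w for all words w, then M is symétral. -/

variable {Ω : Type*} {K : Type*} [Field K]

lemma sh_nil_left (M : List Ω → K) (v : List Ω) : shuffleSum M [] v = M v := by
  simp [shuffleSum, shuffles]

lemma sh_nil_right (M : List Ω → K) (u : List Ω) : shuffleSum M u [] = M u := by
  cases u <;> simp [shuffleSum, shuffles]

lemma sh_cons (M : List Ω → K) (a b : Ω) (u v : List Ω) :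
    shuffleSum M (a :: u) (b :: v) =
      shuffleSum (fun w => M (a :: w)) u (b :: v)
        + shuffleSum (fun w => M (b :: w)) (a :: u) v := by
  simp [shuffleSum, shuffles, Multiset.map_map, Function.comp_def]

lemma mmul_cons (A M : List Ω → K) (a : Ω) (w : List Ω) :
    mmul A M (a :: w) = mmul (fun w => A (a :: w)) M w + A [] * M (a :: w) := by
  simp [mmul, Finset.sum_range_succ' _ (w.length + 1)]

lemma sh_add (M N : List Ω → K) (u v : List Ω) :
    shuffleSum (fun w => M w + N w) u v = shuffleSum M u v + shuffleSum N u v := by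
  simp [shuffleSum]

lemma sh_mul_left (c : K) (M : List Ω → K) (u v : List Ω) :
    shuffleSum (fun w => c * M w) u v = c * shuffleSum M u v := by
  simp [shuffleSum, Multiset.sum_map_mul_left]

/-- The double deconcatenation sum. -/
def dsum (A M : List Ω → K) (u v : List Ω) : K :=
  ∑ i ∈ Finset.range (u.length + 1), ∑ j ∈ Finset.range (v.length + 1),
    shuffleSum A (u.take i) (v.take j) * shuffleSum M (u.drop i) (v.drop j)

lemma dsum_cons (A M : List Ω → K) (a b : Ω) (u v : List Ω) :
    dsum A M (a :: u) (b :: v) =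
      dsum (fun w => A (a :: w)) M u (b :: v) + dsum (fun w => A (b :: w)) M (a :: u) v
        + A [] * shuffleSum M (a :: u) (b :: v) := by
  simp only [dsum, List.length_cons]
  rw [Finset.sum_range_succ' _ (u.length + 1)]
  rw [Finset.sum_range_succ' _ (u.length + 1)]
  simp only [Finset.sum_range_succ' _ (v.length + 1)]
  simp only [List.take_succ_cons, List.drop_succ_cons, List.take_zero, List.drop_zero,
    sh_cons A, sh_nil_left, sh_nil_right, add_mul, Finset.sum_add_distrib]
  ring

theorem sh_mmul (M : List Ω → K) : ∀ (n : ℕ) (A : List Ω → K) (u v : List Ω),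
    u.length + v.length = n → shuffleSum (mmul A M) u v = dsum A M u v := by
  intro n
  induction n with
  | zero =>
    intro A u v h
    obtain rfl : u = [] := List.length_eq_zero_iff.1 (by omega)
    simp [dsum, sh_nil_left, mmul]
  | succ n ih =>
    intro A u v h
    rcases u with _ | ⟨a, u⟩
    · simp [dsum, sh_nil_left, mmul]
    rcases v with _ | ⟨b, v⟩
    · simp [dsum, sh_nil_right, mmul]
    simp only [List.length_cons] at h
    rw [dsum_cons, sh_cons]
    simp only [mmul_cons, sh_add, sh_mul_left]
    rw [ih _ u (b :: v) (by simp; omega), ih _ (a :: u) v (by simp; omega), sh_cons M]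
    ring

lemma lam_shuffles (lam : List Ω → K)
    (hadd : ∀ u v : List Ω, lam (u ++ v) = lam u + lam v) (M : List Ω → K) (u v : List Ω) :
    shuffleSum (fun w => lam w * M w) u v = (lam u + lam v) * shuffleSum M u v := by
  have h0 : lam [] = 0 := by simpa using hadd [] []
  have hc : ∀ a w, lam (a :: w) = lam [a] + lam w := fun a w => hadd [a] w
  induction hn : u.length + v.length generalizing u v M with
  | zero =>
    obtain rfl : u = [] := List.length_eq_zero_iff.1 (by omega)
    simp [sh_nil_left, h0]
  | succ n ih =>
    rcases u with _ | ⟨a, u⟩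
    · simp [sh_nil_left, h0]
    rcases v with _ | ⟨b, v⟩
    · simp [sh_nil_right, h0]
    simp only [List.length_cons] at hn
    rw [sh_cons, sh_cons]
    have e : ∀ c : Ω, (fun w => lam (c :: w) * M (c :: w))
        = fun w => lam [c] * M (c :: w) + lam w * M (c :: w) := by
      intro c; funext w; rw [hc]; ring
    rw [e, e, sh_add, sh_add, sh_mul_left, sh_mul_left,
      ih (fun w => M (a :: w)) u (b :: v) (by simp; omega),
      ih (fun w => M (b :: w)) (a :: u) v (by simp; omega), hc a u, hc b v]
    ring

theorem symetral_of_mould_differential_equation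
    (lam : List Ω → K)
    (hadd : ∀ u v : List Ω, lam (u ++ v) = lam u + lam v)
    (hne : ∀ w : List Ω, w ≠ [] → lam w ≠ 0)
    (M A : List Ω → K)
    (hM0 : M [] = 1)
    (hA : Alternal A)
    (heq : ∀ w : List Ω, lam w * M w = mmul A M w) :
    Symetral M := by
  refine ⟨hM0, ?_⟩
  intro u v
  induction hn : u.length + v.length using Nat.strong_induction_on generalizing u v with
  | _ n ih =>
    rcases u with _ | ⟨a, u⟩
    · simp [sh_nil_left, hM0]
    rcases v with _ | ⟨b, v⟩
    · simp [sh_nil_right, hM0]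
    simp only [List.length_cons] at hn
    have key := lam_shuffles lam hadd M (a :: u) (b :: v)
    rw [funext heq,
      sh_mmul M _ A _ _ rfl] at key
    have hu := heq (a :: u)
    have hv := heq (b :: v)
    have hpos := hne ((a :: u) ++ (b :: v)) (by simp)
    rw [hadd] at hpos
    refine mul_left_cancel₀ hpos ?_
    rw [← key]
    trans mmul A M (a :: u) * M (b :: v) + M (a :: u) * mmul A M (b :: v)
    · simp only [dsum, mmul, List.length_cons]
      simp only [Finset.sum_range_succ' _ (u.length + 1),
        Finset.sum_range_succ' _ (v.length + 1)]
      simp only [List.take_succ_cons, List.drop_succ_cons, List.take_zero, List.drop_zero,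
        sh_nil_left, sh_nil_right, hA.1, zero_mul, add_zero]
      simp only [hA.2 _ _ (List.cons_ne_nil _ _) (List.cons_ne_nil _ _), zero_mul,
        Finset.sum_const_zero, zero_add]
      rw [Finset.sum_mul, Finset.mul_sum]
      congr 1
      · refine Finset.sum_congr rfl fun i _ => ?_
        rw [ih _ ?_ (u.drop i) (b :: v) rfl, mul_assoc]
        simp only [List.length_drop, List.length_cons]; omega
      · refine Finset.sum_congr rfl fun j _ => ?_
        rw [ih _ ?_ (a :: u) (v.drop j) rfl]
        · ring
        simp only [List.length_drop, List.length_cons]; omega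
    · rw [← hu, ← hv]; ring

end Moulds
end
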